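/- There exists an arithmetic function h : ℕ → ℝ such that ∑_{n≥1} |h(n)| n^{-σ} converges for every σ > 1/2, and for every complex s with Re s > 1 one has ∑_{m₁,m₂ ≥ 1, m₁m₂ a perfect square} s(m₁,m₂)/(m₁m₂)^s = ζ(2s−1) · ∑_{n≥1} h(n) n^{-s}, where ζ is the Riemann zeta function. -/

import Mathlib

open scoped Classical
/-- `numSubgroups m₁ m₂` is the number of subgroups of the additive group
`ℤ_{m₁} × ℤ_{m₂}`. -/
noncomputable def numSubgroups (m₁ m₂ : ℕ) : ℕ :=
  Nat.card (AddSubgroup (ZMod m₁ × ZMod m₂))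

/-- Subgroups of a product: projection, kernel part, and gluing homomorphism. -/
noncomputable def subEquiv (A B : Type) [AddCommGroup A] [AddCommGroup B] :
    AddSubgroup (A × B) ≃ (Σ K : AddSubgroup A, Σ L : AddSubgroup B, (K →+ B ⧸ L)) := by
  symm
  refine Equiv.ofBijective (fun x =>
    { carrier := {p | ∃ h : p.1 ∈ x.1, x.2.2 ⟨p.1, h⟩ = QuotientAddGroup.mk p.2}
      zero_mem' := ⟨x.1.zero_mem, by
        have : (⟨(0 : A × B).1, x.1.zero_mem⟩ : x.1) = 0 := rfl
        rw [this, map_zero]; rfl⟩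
      add_mem' := by
        rintro p q ⟨hp, hp'⟩ ⟨hq, hq'⟩
        refine ⟨x.1.add_mem hp hq, ?_⟩
        have : (⟨(p + q).1, x.1.add_mem hp hq⟩ : x.1) = ⟨p.1, hp⟩ + ⟨q.1, hq⟩ := rfl
        rw [this, map_add, hp', hq']; rfl
      neg_mem' := by
        rintro p ⟨hp, hp'⟩
        refine ⟨x.1.neg_mem hp, ?_⟩
        have : (⟨(-p).1, x.1.neg_mem hp⟩ : x.1) = -⟨p.1, hp⟩ := rfl
        rw [this, map_neg, hp']; rfl }) ⟨?_, ?_⟩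
  · rintro ⟨K, L, f⟩ ⟨K', L', f'⟩ hh
    have key : ∀ a b, (∃ h : a ∈ K, f ⟨a, h⟩ = QuotientAddGroup.mk b) ↔
        (∃ h : a ∈ K', f' ⟨a, h⟩ = QuotientAddGroup.mk b) := by
      intro a b
      have := SetLike.ext_iff.1 hh (a, b)
      exact this
    have hK : K = K' := by
      ext a
      constructor
      · intro h
        obtain ⟨b, hb⟩ := QuotientAddGroup.mk_surjective (f ⟨a, h⟩)
        exact ((key a b).1 ⟨h, hb.symm⟩).1
      · intro h
        obtain ⟨b, hb⟩ := QuotientAddGroup.mk_surjective (f' ⟨a, h⟩)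
        exact ((key a b).2 ⟨h, hb.symm⟩).1
    subst hK
    have hL : L = L' := by
      ext b
      have h0 := key 0 b
      have e : ∀ h : (0 : A) ∈ K, (⟨0, h⟩ : K) = 0 := fun _ => rfl
      simp only [e, map_zero, K.zero_mem, exists_true_left] at h0
      rw [eq_comm, QuotientAddGroup.eq_zero_iff, eq_comm, QuotientAddGroup.eq_zero_iff] at h0
      exact h0
    subst hL
    have hf : f = f' := by
      ext ⟨a, h⟩
      obtain ⟨b, hb⟩ := QuotientAddGroup.mk_surjective (f ⟨a, h⟩)
      obtain ⟨_, h2⟩ := (key a b).1 ⟨h, hb.symm⟩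
      rw [h2, hb]
    subst hf
    rfl
  · intro H
    let K : AddSubgroup A := H.map (AddMonoidHom.fst A B)
    let L : AddSubgroup B := H.comap (AddMonoidHom.inr A B)
    have hex : ∀ a : K, ∃ b : B, (a.1, b) ∈ H := by
      rintro ⟨a, ⟨⟨a', b⟩, h, rfl⟩⟩
      exact ⟨b, h⟩
    have huniq : ∀ a b b', (a, b) ∈ H → (a, b') ∈ H →
        (QuotientAddGroup.mk b : B ⧸ L) = QuotientAddGroup.mk b' := by
      intro a b b' h h'
      rw [QuotientAddGroup.eq]
      have := H.add_mem (H.neg_mem h) h'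
      simpa [L] using this
    choose g hg using hex
    let f : K →+ B ⧸ L := AddMonoidHom.mk' (fun a => QuotientAddGroup.mk (g a)) (by
      intro a a'
      rw [← QuotientAddGroup.mk_add]
      exact huniq _ _ _ (hg (a + a')) (by simpa using H.add_mem (hg a) (hg a')))
    refine ⟨⟨K, L, f⟩, ?_⟩
    ext ⟨a, b⟩
    constructor
    · rintro ⟨h, h'⟩
      change (QuotientAddGroup.mk (g ⟨a, h⟩) : B ⧸ L) = QuotientAddGroup.mk b at h'
      rw [QuotientAddGroup.eq] at h'
      have h1 : ((0 : A), -g ⟨a, h⟩ + b) ∈ H := h'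
      simpa using H.add_mem (hg ⟨a, h⟩) h1
    · intro h
      have hK : a ∈ K := ⟨(a, b), h, rfl⟩
      exact ⟨hK, huniq _ _ _ (hg ⟨a, hK⟩) h⟩

lemma card_hom (K Q : Type) [AddCommGroup K] [AddCommGroup Q] [Finite K] [Finite Q]
    [hK : IsAddCyclic K] [IsAddCyclic Q] :
    Nat.card (K →+ Q) = Nat.gcd (Nat.card K) (Nat.card Q) := by
  have e1 : (K →+ Q) ≃ (ZMod (Nat.card K) →+ Q) :=
    { toFun := fun f => f.comp (zmodAddCyclicAddEquiv hK).toAddMonoidHom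
      invFun := fun f => f.comp (zmodAddCyclicAddEquiv hK).symm.toAddMonoidHom
      left_inv := fun f => by ext; simp
      right_inv := fun f => by ext; simp }
  have e2 : {f : ℤ →+ Q // f (Nat.card K) = 0} ≃ (nsmulAddMonoidHom (α := Q) (Nat.card K)).ker :=
    Equiv.subtypeEquiv (zmultiplesHom Q).symm (by
      intro f
      have : f (Nat.card K : ℤ) = (Nat.card K) • f 1 := by
        rw [← map_nsmul]; simp
      rw [this]; rfl)
  rw [Nat.card_congr e1, ← Nat.card_congr (ZMod.lift (Nat.card K) (A := Q)), Nat.card_congr e2,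
    IsAddCyclic.card_nsmulAddMonoidHom_ker, Nat.gcd_comm]

lemma sum_sub {A : Type} [AddCommGroup A] [Finite A] [Fintype (AddSubgroup A)] [IsAddCyclic A]
    (F : ℕ → ℕ) :
    ∑ K : AddSubgroup A, F (Nat.card K) = ∑ d ∈ (Nat.card A).divisors, F d := by
  have hpos : Nat.card A ≠ 0 := Nat.card_pos.ne'
  have hk : ∀ K : AddSubgroup A, K = (nsmulAddMonoidHom (α := A) (Nat.card K)).ker := by
    intro K
    apply AddSubgroup.eq_of_le_of_card_ge
    · intro x hx
      rw [AddMonoidHom.mem_ker]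
      change Nat.card K • x = 0
      have := card_nsmul_eq_zero' (x := (⟨x, hx⟩ : K))
      exact congrArg Subtype.val this
    · rw [IsAddCyclic.card_nsmulAddMonoidHom_ker, Nat.gcd_eq_right K.card_addSubgroup_dvd_card]
  refine Finset.sum_bij (fun K _ => Nat.card K) ?_ ?_ ?_ ?_
  · intro K _
    exact Nat.mem_divisors.2 ⟨K.card_addSubgroup_dvd_card, hpos⟩
  · intro K _ K' _ h
    rw [hk K, hk K', h]
  · intro d hd
    refine ⟨(nsmulAddMonoidHom (α := A) d).ker, Finset.mem_univ _, ?_⟩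
    rw [IsAddCyclic.card_nsmulAddMonoidHom_ker, Nat.gcd_eq_right (Nat.dvd_of_mem_divisors hd)]
  · intros; rfl

lemma numSubgroups_eq (m n : ℕ) (hm : m ≠ 0) (hn : n ≠ 0) :
    numSubgroups m n = ∑ d ∈ m.divisors, ∑ e ∈ n.divisors, Nat.gcd d e := by
  have : NeZero m := ⟨hm⟩
  have : NeZero n := ⟨hn⟩
  have : Fintype (AddSubgroup (ZMod m)) := Fintype.ofFinite _
  have : Fintype (AddSubgroup (ZMod n)) := Fintype.ofFinite _
  have hcyc : ∀ L : AddSubgroup (ZMod n), IsAddCyclic (ZMod n ⧸ L) := fun L =>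
    isAddCyclic_of_surjective (QuotientAddGroup.mk' L) (QuotientAddGroup.mk'_surjective L)
  have hfin : ∀ (K : AddSubgroup (ZMod m)) (L : AddSubgroup (ZMod n)), Finite (K →+ ZMod n ⧸ L) :=
    fun K L => DFunLike.finite _
  rw [numSubgroups, Nat.card_congr (subEquiv _ _), Nat.card_sigma]
  have h1 : ∀ K : AddSubgroup (ZMod m), Nat.card (Σ L : AddSubgroup (ZMod n), (K →+ ZMod n ⧸ L)) =
      ∑ e ∈ n.divisors, Nat.gcd (Nat.card K) e := by
    intro K
    rw [Nat.card_sigma]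
    have h2 : ∀ L : AddSubgroup (ZMod n), Nat.card (K →+ ZMod n ⧸ L) =
        Nat.gcd (Nat.card K) (n / Nat.card L) := by
      intro L
      have := hcyc L
      rw [card_hom]
      congr 1
      have := L.card_eq_card_quotient_mul_card_addSubgroup
      rw [Nat.card_zmod] at this
      rw [eq_comm, Nat.div_eq_of_eq_mul_left Nat.card_pos this]
    simp_rw [h2]
    rw [sum_sub (fun l => Nat.gcd (Nat.card K) (n / l)), Nat.card_zmod,
      Nat.sum_div_divisors n (fun l => Nat.gcd (Nat.card K) l)]
  simp_rw [h1]
  rw [sum_sub (fun d => ∑ e ∈ n.divisors, Nat.gcd d e), Nat.card_zmod]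
/-- number of multiples of `d` among the divisors of `a` -/
noncomputable def cdiv (d a : ℕ) : ℕ := ∑ x ∈ a.divisors, if d ∣ x then 1 else 0

lemma cdiv_zero {d a : ℕ} (h : ¬ d ∣ a) : cdiv d a = 0 := by
  apply Finset.sum_eq_zero
  intro x hx
  rw [if_neg]
  exact fun h' => h (h'.trans (Nat.dvd_of_mem_divisors hx))

lemma cdiv_mul {d a : ℕ} (hd : d ≠ 0) (ha : a ≠ 0) : cdiv d (d * a) = a.divisors.card := by
  rw [cdiv, ← Finset.sum_filter, ← Finset.card_eq_sum_ones]
  symm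
  refine Finset.card_bij (fun x _ => d * x) ?_ ?_ ?_
  · intro x hx
    simp only [Finset.mem_filter, Nat.mem_divisors] at hx ⊢
    exact ⟨⟨Nat.mul_dvd_mul_left _ hx.1, mul_ne_zero hd ha⟩, Dvd.intro _ rfl⟩
  · intro x _ y _ h
    exact Nat.eq_of_mul_eq_mul_left (Nat.pos_of_ne_zero hd) h
  · intro y hy
    simp only [Finset.mem_filter, Nat.mem_divisors] at hy
    obtain ⟨⟨h1, _⟩, x, rfl⟩ := hy
    exact ⟨x, Nat.mem_divisors.2 ⟨Nat.dvd_of_mul_dvd_mul_left (Nat.pos_of_ne_zero hd) h1, ha⟩, rfl⟩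

lemma numSubgroups_eq2 {a b n : ℕ} (hn : n ≠ 0) (h : a * b = n ^ 2) :
    numSubgroups a b = ∑ d ∈ n.divisors, d.totient * (cdiv d a * cdiv d b) := by
  have hab : a * b ≠ 0 := by rw [h]; positivity
  rw [numSubgroups_eq a b (left_ne_zero_of_mul hab) (right_ne_zero_of_mul hab)]
  have key : ∀ x ∈ a.divisors, ∀ y ∈ b.divisors, Nat.gcd x y =
      ∑ d ∈ n.divisors, d.totient * ((if d ∣ x then 1 else 0) * (if d ∣ y then 1 else 0)) := by
    intro x hx y hy
    have hx0 : x ≠ 0 := (Nat.pos_of_mem_divisors hx).ne'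
    have hd : (x.gcd y) ∣ n := by
      rw [← Nat.pow_dvd_pow_iff two_ne_zero, ← h, sq]
      exact Nat.mul_dvd_mul ((Nat.gcd_dvd_left _ _).trans (Nat.dvd_of_mem_divisors hx))
        ((Nat.gcd_dvd_right _ _).trans (Nat.dvd_of_mem_divisors hy))
    conv_lhs => rw [← Nat.sum_totient (x.gcd y)]
    have hsub : (x.gcd y).divisors ⊆ n.divisors := Nat.divisors_subset_of_dvd hn hd
    rw [← Finset.sum_subset hsub]
    · apply Finset.sum_congr rfl
      intro d hd
      have := Nat.dvd_gcd_iff.1 (Nat.dvd_of_mem_divisors hd)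
      simp [this.1, this.2]
    · intro d _ hd'
      have : ¬ (d ∣ x ∧ d ∣ y) := fun hh =>
        hd' (Nat.mem_divisors.2 ⟨Nat.dvd_gcd hh.1 hh.2, Nat.gcd_ne_zero_left hx0⟩)
      by_cases h1 : d ∣ x
      · have h2 : ¬ d ∣ y := fun h2 => this ⟨h1, h2⟩
        simp [h2]
      · simp [h1]
  rw [Finset.sum_congr rfl (fun x hx => Finset.sum_congr rfl (key x hx))]
  simp_rw [cdiv, Finset.sum_mul_sum, Finset.mul_sum]
  rw [Finset.sum_congr rfl (fun x _ => Finset.sum_comm), Finset.sum_comm]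

/-- `G n = ∑_{ab = n²} τ(a)τ(b)` -/
noncomputable def GG : ArithmeticFunction ℤ :=
  ⟨fun n => ∑ p ∈ (n ^ 2).divisorsAntidiagonal, (p.1.divisors.card * p.2.divisors.card : ℤ), by simp⟩

noncomputable def FF : ArithmeticFunction ℤ :=
  ⟨fun n => ∑ p ∈ (n ^ 2).divisorsAntidiagonal, (numSubgroups p.1 p.2 : ℤ), by simp⟩

noncomputable def PP : ArithmeticFunction ℤ := ⟨fun n => (n.totient : ℤ), by simp⟩

noncomputable def II : ArithmeticFunction ℤ := ⟨fun n => (n : ℤ), by simp⟩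

noncomputable def HH : ArithmeticFunction ℤ := ArithmeticFunction.moebius * GG

lemma GG_inner (d k : ℕ) (hd : d ≠ 0) (hk : k ≠ 0) :
    ∑ p ∈ ((d * k) ^ 2).divisorsAntidiagonal, (cdiv d p.1 * cdiv d p.2 : ℤ) = GG k := by
  symm
  change ∑ p ∈ (k ^ 2).divisorsAntidiagonal, (p.1.divisors.card * p.2.divisors.card : ℤ) = _
  refine Finset.sum_of_injOn (fun p => (d * p.1, d * p.2)) ?_ ?_ ?_ ?_
  · rintro ⟨x, y⟩ _ ⟨x', y'⟩ _ h
    simpa [hd] using h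
  · rintro ⟨x, y⟩ h
    simp only [Finset.mem_coe, Nat.mem_divisorsAntidiagonal] at h ⊢
    refine ⟨?_, by positivity⟩
    rw [mul_pow, ← h.1]; ring
  · rintro ⟨x, y⟩ h h'
    by_cases h1 : d ∣ x
    · by_cases h2 : d ∣ y
      · exfalso
        apply h'
        obtain ⟨x, rfl⟩ := h1
        obtain ⟨y, rfl⟩ := h2
        refine ⟨(x, y), ?_, rfl⟩
        simp only [Finset.mem_coe, Nat.mem_divisorsAntidiagonal] at h ⊢
        refine ⟨?_, by positivity⟩
        have : d ^ 2 * (x * y) = d ^ 2 * k ^ 2 := by rw [← mul_pow, ← h.1]; ring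
        exact Nat.eq_of_mul_eq_mul_left (by positivity) this
      · simp [cdiv_zero h2]
    · simp [cdiv_zero h1]
  · rintro ⟨x, y⟩ h
    rw [Nat.mem_divisorsAntidiagonal] at h
    have hxy : x * y ≠ 0 := by rw [h.1]; exact h.2
    simp only
    rw [cdiv_mul hd (left_ne_zero_of_mul hxy), cdiv_mul hd (right_ne_zero_of_mul hxy)]

lemma FF_eq : FF = PP * GG := by
  ext n
  rcases eq_or_ne n 0 with rfl | hn
  · simp
  rw [ArithmeticFunction.mul_apply]
  change ∑ p ∈ (n ^ 2).divisorsAntidiagonal, (numSubgroups p.1 p.2 : ℤ) = _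
  have h1 : ∀ p ∈ (n ^ 2).divisorsAntidiagonal, (numSubgroups p.1 p.2 : ℤ) =
      ∑ d ∈ n.divisors, d.totient * (cdiv d p.1 * cdiv d p.2 : ℤ) := by
    intro p hp
    rw [numSubgroups_eq2 hn (Nat.mem_divisorsAntidiagonal.1 hp).1]
    push_cast; rfl
  rw [Finset.sum_congr rfl h1, Finset.sum_comm,
    Nat.sum_divisorsAntidiagonal (f := fun a b => PP a * GG b)]
  apply Finset.sum_congr rfl
  intro d hd
  rw [← Finset.mul_sum]
  obtain ⟨⟨k, rfl⟩, _⟩ := Nat.mem_divisors.1 hd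
  have hd0 := left_ne_zero_of_mul hn
  rw [GG_inner d k hd0 (right_ne_zero_of_mul hn), Nat.mul_div_cancel_left _ (Nat.pos_of_ne_zero hd0)]
  rfl

lemma PP_zeta : PP * (ArithmeticFunction.zeta : ArithmeticFunction ℤ) = II := by
  ext n
  rw [ArithmeticFunction.coe_mul_zeta_apply]
  change ∑ d ∈ n.divisors, (d.totient : ℤ) = n
  exact_mod_cast Nat.sum_totient n

lemma FF_eq2 : FF = II * HH := by
  rw [FF_eq, HH, ← PP_zeta, mul_assoc, ← mul_assoc _ ArithmeticFunction.moebius GG,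
    ArithmeticFunction.coe_zeta_mul_moebius, one_mul]

lemma prime_pow_bound {ε : ℝ} (hε : 0 < ε) (p a : ℕ) (hp : 2 ≤ p) :
    ((a : ℝ) + 1) ≤ (if p < ⌈(2 : ℝ) ^ (1 / ε)⌉₊ then max 1 (1 / (ε * Real.log 2)) else 1) *
      (p : ℝ) ^ (a * ε) := by
  have hp' : (2 : ℝ) ≤ p := by exact_mod_cast hp
  split_ifs with h
  · have h2 : (2 : ℝ) ^ (a * ε) ≤ (p : ℝ) ^ (a * ε) := by
      exact Real.rpow_le_rpow (by positivity) hp' (by positivity)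
    have h3 : 1 + a * (ε * Real.log 2) ≤ (2 : ℝ) ^ (a * ε) := by
      rw [Real.rpow_def_of_pos two_pos]
      have := Real.add_one_le_exp (Real.log 2 * (a * ε))
      linarith
    have hl : 0 < ε * Real.log 2 := mul_pos hε (Real.log_pos one_lt_two)
    set K := max 1 (1 / (ε * Real.log 2))
    have hK1 : 1 ≤ K := le_max_left _ _
    have hK2 : 1 ≤ K * (ε * Real.log 2) := by
      rw [← div_le_iff₀ hl]; exact le_max_right _ _
    have ha : (0 : ℝ) ≤ a := by positivity
    calc (a : ℝ) + 1 ≤ K * (1 + a * (ε * Real.log 2)) := by nlinarith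
      _ ≤ _ := by apply mul_le_mul_of_nonneg_left (h3.trans h2); linarith
  · push Not at h
    have h1 : (2 : ℝ) ^ (1 / ε) ≤ p := Nat.ceil_le.1 h
    have h2 : (2 : ℝ) ≤ (p : ℝ) ^ ε := by
      calc (2 : ℝ) = ((2 : ℝ) ^ (1 / ε)) ^ ε := by
            rw [← Real.rpow_mul two_pos.le, one_div_mul_cancel hε.ne', Real.rpow_one]
        _ ≤ _ := Real.rpow_le_rpow (by positivity) h1 hε.le
    rw [one_mul, mul_comm, Real.rpow_mul (by positivity), Real.rpow_natCast]
    calc (a : ℝ) + 1 ≤ 2 ^ a := by exact_mod_cast Nat.lt_two_pow_self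
      _ ≤ _ := pow_le_pow_left₀ two_pos.le h2 a

lemma divisor_bound {ε : ℝ} (hε : 0 < ε) :
    ∃ C : ℝ, 0 ≤ C ∧ ∀ n : ℕ, n ≠ 0 → (n.divisors.card : ℝ) ≤ C * (n : ℝ) ^ ε := by
  set N := ⌈(2 : ℝ) ^ (1 / ε)⌉₊ with hN
  set K := max 1 (1 / (ε * Real.log 2)) with hK
  have hK1 : 1 ≤ K := le_max_left _ _
  refine ⟨K ^ N, by positivity, fun n hn => ?_⟩
  rw [Nat.card_divisors hn]
  have h1 : (n : ℝ) ^ ε = ∏ p ∈ n.primeFactors, (p : ℝ) ^ ((n.factorization p : ℝ) * ε) := by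
    conv_lhs => rw [← Nat.prod_factorization_pow_eq_self hn]
    rw [Finsupp.prod, Nat.support_factorization]
    push_cast
    rw [← Real.finsetProd_rpow _ _ (fun i _ => by positivity)]
    apply Finset.prod_congr rfl
    intro p _
    rw [Real.rpow_mul (by positivity), Real.rpow_natCast]
  rw [h1]
  push_cast
  calc ∏ p ∈ n.primeFactors, ((n.factorization p : ℝ) + 1)
      ≤ ∏ p ∈ n.primeFactors, ((if p < N then K else 1) * (p : ℝ) ^ ((n.factorization p : ℝ) * ε)) := by
        apply Finset.prod_le_prod
        · intros; positivity
        · intro p hp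
          exact prime_pow_bound hε p _ (Nat.prime_of_mem_primeFactors hp).two_le
    _ = (∏ p ∈ n.primeFactors, (if p < N then K else 1)) *
        ∏ p ∈ n.primeFactors, (p : ℝ) ^ ((n.factorization p : ℝ) * ε) := Finset.prod_mul_distrib
    _ ≤ _ := by
        apply mul_le_mul_of_nonneg_right _ (by positivity)
        rw [← Finset.prod_filter, Finset.prod_const]
        apply pow_le_pow_right₀ hK1
        calc _ ≤ (Finset.range N).card := Finset.card_le_card (by
              intro p hp
              simp only [Finset.mem_filter] at hp
              simpa using hp.2)
          _ = N := by simp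

lemma GG_bound {δ : ℝ} (hδ : 0 < δ) :
    ∃ C : ℝ, ∀ n : ℕ, n ≠ 0 → ‖((GG n : ℤ) : ℂ)‖ ≤ C * (n : ℝ) ^ δ := by
  obtain ⟨C, hC, h⟩ := divisor_bound (ε := δ / 6) (by positivity)
  refine ⟨C ^ 3, fun n hn => ?_⟩
  have hn2 : n ^ 2 ≠ 0 := by positivity
  have h1 : |GG n| ≤ ((n ^ 2).divisors.card : ℤ) ^ 3 := by
    change |∑ p ∈ (n ^ 2).divisorsAntidiagonal, (p.1.divisors.card * p.2.divisors.card : ℤ)| ≤ _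
    rw [abs_of_nonneg (by positivity)]
    calc _ ≤ ∑ p ∈ (n ^ 2).divisorsAntidiagonal,
          ((n ^ 2).divisors.card * (n ^ 2).divisors.card : ℤ) := by
          apply Finset.sum_le_sum
          intro p hp
          have hp1 := (Nat.mem_divisorsAntidiagonal.1 hp).1
          have e1 : p.1.divisors.card ≤ (n ^ 2).divisors.card :=
            Finset.card_le_card (Nat.divisors_subset_of_dvd hn2 ⟨p.2, hp1.symm⟩)
          have e2 : p.2.divisors.card ≤ (n ^ 2).divisors.card :=
            Finset.card_le_card (Nat.divisors_subset_of_dvd hn2 ⟨p.1, by rw [← hp1, mul_comm]⟩)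
          exact_mod_cast Nat.mul_le_mul e1 e2
      _ = _ := by
        rw [Finset.sum_const, ← Nat.map_div_right_divisors, Finset.card_map]
        simp; ring
  have h2 : ‖((GG n : ℤ) : ℂ)‖ ≤ ((n ^ 2).divisors.card : ℝ) ^ 3 := by
    rw [Complex.norm_intCast]; exact_mod_cast h1
  refine h2.trans ((pow_le_pow_left₀ (by positivity) (h _ hn2) 3).trans (le_of_eq ?_))
  rw [mul_pow]
  congr 1
  push_cast
  rw [← Real.rpow_natCast (n : ℝ) 2, ← Real.rpow_mul (by positivity), ← Real.rpow_natCast,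
    ← Real.rpow_mul (by positivity)]
  congr 1
  push_cast; ring

lemma GG_summable {w : ℂ} (hw : 1 < w.re) : LSeriesSummable (fun n => ((GG n : ℤ) : ℂ)) w := by
  obtain ⟨C, h⟩ := GG_bound (δ := (w.re - 1) / 2) (by linarith)
  refine LSeriesSummable_of_le_const_mul_rpow (x := (w.re - 1) / 2 + 1) (by linarith) ⟨C, ?_⟩
  intro n hn
  simpa using h n hn

lemma HH_summable {w : ℂ} (hw : 1 < w.re) : LSeriesSummable (fun n => ((HH n : ℤ) : ℂ)) w := by
  have h := ArithmeticFunction.LSeriesSummable_mul (f := (ArithmeticFunction.moebius : ArithmeticFunction ℂ))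
    (g := (GG : ArithmeticFunction ℂ)) (s := w)
    (by simpa using ArithmeticFunction.LSeriesSummable_moebius_iff.2 hw) (by simpa using GG_summable hw)
  rw [← ArithmeticFunction.intCoe_mul] at h
  exact h

lemma II_hasSum {w : ℂ} (hw : 2 < w.re) :
    LSeriesHasSum (fun n => ((II n : ℤ) : ℂ)) w (riemannZeta (w - 1)) := by
  have h := LSeriesHasSum_one (s := w - 1) (by simp; linarith)
  unfold LSeriesHasSum at h ⊢
  convert h using 1
  ext n
  rcases eq_or_ne n 0 with rfl | hn
  · simp
  rw [LSeries.term_of_ne_zero hn, LSeries.term_of_ne_zero hn]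
  have hn' : (n : ℂ) ≠ 0 := by exact_mod_cast hn
  rw [Complex.cpow_sub _ _ hn', Complex.cpow_one]
  change ((n : ℤ) : ℂ) / _ = _
  simp

lemma FF_hasSum {w : ℂ} (hw : 2 < w.re) :
    LSeriesHasSum (fun n => ((FF n : ℤ) : ℂ)) w
      (riemannZeta (w - 1) * LSeries (fun n => ((HH n : ℤ) : ℂ)) w) := by
  have h := ArithmeticFunction.LSeriesHasSum_mul (f := (II : ArithmeticFunction ℂ))
    (g := (HH : ArithmeticFunction ℂ)) (s := w)
    (by simpa using II_hasSum hw) (by simpa using (HH_summable (w := w) (by linarith)).LSeriesHasSum)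
  rw [← ArithmeticFunction.intCoe_mul, ← FF_eq2] at h
  simpa using h

lemma sq_cpow (n : ℕ) (s : ℂ) : ((n ^ 2 : ℕ) : ℂ) ^ s = (n : ℂ) ^ (2 * s) := by
  have h := Complex.cpow_nat_mul (n : ℂ) 2 s
  rw [Nat.cast_ofNat] at h
  rw [h, sq, Nat.cast_mul, Complex.natCast_mul_natCast_cpow, sq]

/-- the function `h` of the theorem -/
noncomputable def hh (k : ℕ) : ℝ := if k = (Nat.sqrt k) ^ 2 then ((HH (Nat.sqrt k) : ℤ) : ℝ) else 0

lemma hh_sq (n : ℕ) : hh (n ^ 2) = ((HH n : ℤ) : ℝ) := by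
  simp [hh, Nat.sqrt_eq']

lemma hh_support {k : ℕ} (h : hh k ≠ 0) : k ∈ Set.range (fun n : ℕ => n ^ 2) := by
  by_contra hk
  apply h
  rw [hh, if_neg]
  exact fun e => hk ⟨_, e.symm⟩

lemma sq_inj : Function.Injective (fun n : ℕ => n ^ 2) := fun a b h =>
  (Nat.pow_left_injective two_ne_zero) h

lemma term_HH (s : ℂ) (n : ℕ) :
    LSeries.term (fun n => ((HH n : ℤ) : ℂ)) (2 * s) n = (hh (n ^ 2) : ℂ) / ((n ^ 2 : ℕ) : ℂ) ^ s := by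
  rcases eq_or_ne n 0 with rfl | hn
  · simp [hh]
  · rw [LSeries.term_of_ne_zero hn, hh_sq, sq_cpow]; simp

lemma hh_summable {σ : ℝ} (hσ : 1 / 2 < σ) : Summable fun n : ℕ => |hh n| / (n : ℝ) ^ σ := by
  rw [← sq_inj.summable_iff]
  · have h := (HH_summable (w := 2 * (σ : ℂ)) (by simp; linarith)).norm
    refine h.congr fun n => ?_
    rw [term_HH]
    simp only [Function.comp_apply, norm_div, Complex.norm_real, Real.norm_eq_abs]
    congr 1
    rw [← Complex.ofReal_natCast, ← Complex.ofReal_cpow (by positivity), Complex.norm_real,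
      Real.norm_eq_abs, abs_of_nonneg (by positivity)]
  · intro k hk
    have : hh k = 0 := by
      by_contra h
      exact hk (hh_support h)
    simp [this]

lemma hh_tsum (s : ℂ) :
    ∑' n : ℕ, (hh n : ℂ) / (n : ℂ) ^ s = LSeries (fun n => ((HH n : ℤ) : ℂ)) (2 * s) := by
  rw [← sq_inj.tsum_eq, LSeries]
  · exact tsum_congr fun n => (term_HH s n).symm
  · intro k hk
    apply hh_support
    intro h
    apply hk
    simp [h]

lemma lhs_tsum {s : ℂ} (hs : 1 < s.re) :
    (∑' p : ℕ × ℕ,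
          if 0 < p.1 ∧ 0 < p.2 ∧ ∃ n : ℕ, p.1 * p.2 = n ^ 2 then
            (numSubgroups p.1 p.2 : ℂ) / ((p.1 * p.2 : ℕ) : ℂ) ^ s
          else 0) = LSeries (fun n => ((FF n : ℤ) : ℂ)) (2 * s) := by
  set F : ℕ × ℕ → ℂ := fun p => if 0 < p.1 ∧ 0 < p.2 ∧ ∃ n : ℕ, p.1 * p.2 = n ^ 2 then
            (numSubgroups p.1 p.2 : ℂ) / ((p.1 * p.2 : ℕ) : ℂ) ^ s
          else 0 with hF
  let ι : (Σ n : ℕ, ((n ^ 2).divisorsAntidiagonal : Finset (ℕ × ℕ))) → ℕ × ℕ := fun x => x.2.1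
  have hι : Function.Injective ι := by
    rintro ⟨n, p, hp⟩ ⟨m, q, hq⟩ h
    change p = q at h
    subst h
    have : n = m := sq_inj
      ((Nat.mem_divisorsAntidiagonal.1 hp).1.symm.trans (Nat.mem_divisorsAntidiagonal.1 hq).1)
    subst this
    rfl
  have hval : ∀ n : ℕ, ∀ p ∈ (n ^ 2).divisorsAntidiagonal,
      F p = (numSubgroups p.1 p.2 : ℂ) / (n : ℂ) ^ (2 * s) := by
    intro n p hp
    obtain ⟨h1, h2⟩ := Nat.mem_divisorsAntidiagonal.1 hp
    have h0 : p.1 * p.2 ≠ 0 := by rw [h1]; exact h2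
    simp only [hF]
    rw [if_pos ⟨Nat.pos_of_ne_zero (left_ne_zero_of_mul h0),
      Nat.pos_of_ne_zero (right_ne_zero_of_mul h0), n, h1⟩, h1, sq_cpow]
  have hsum : LSeriesSummable (fun n => ((FF n : ℤ) : ℂ)) (2 * s) :=
    (FF_hasSum (w := 2 * s) (by simp; linarith)).LSeriesSummable
  have hterm : ∀ n, LSeries.term (fun n => ((FF n : ℤ) : ℂ)) (2 * s) n =
      (∑ p ∈ (n ^ 2).divisorsAntidiagonal, (numSubgroups p.1 p.2 : ℂ)) / (n : ℂ) ^ (2 * s) := by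
    intro n
    rcases eq_or_ne n 0 with rfl | hn
    · simp
    · rw [LSeries.term_of_ne_zero hn]
      congr 1
      change ((∑ p ∈ (n ^ 2).divisorsAntidiagonal, (numSubgroups p.1 p.2 : ℤ) : ℤ) : ℂ) = _
      push_cast; rfl
  have hS : Summable (fun x => F (ι x)) := by
    apply Summable.of_norm
    rw [summable_sigma_of_nonneg (fun _ => norm_nonneg _)]
    refine ⟨fun n => (hasSum_fintype _).summable, ?_⟩
    refine hsum.norm.congr fun n => ?_
    rw [hterm, tsum_fintype]
    change _ = ∑ p : ((n ^ 2).divisorsAntidiagonal : Finset (ℕ × ℕ)), ‖F p.1‖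
    have hv : ∀ p ∈ (n ^ 2).divisorsAntidiagonal,
        ‖F p‖ = (numSubgroups p.1 p.2 : ℝ) / ‖(n : ℂ) ^ (2 * s)‖ := by
      intro p hp
      rw [hval n p hp, norm_div, Complex.norm_natCast]
    rw [Finset.sum_coe_sort _ (fun p => ‖F p‖), Finset.sum_congr rfl hv,
      ← Finset.sum_div, norm_div, ← Nat.cast_sum, Complex.norm_natCast, Nat.cast_sum]
  rw [← hι.tsum_eq, hS.tsum_sigma, LSeries]
  · refine tsum_congr fun n => ?_
    rw [hterm, tsum_fintype]
    change ∑ p : ((n ^ 2).divisorsAntidiagonal : Finset (ℕ × ℕ)), F p.1 = _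
    rw [Finset.sum_coe_sort _ (fun p => F p), Finset.sum_congr rfl (hval n), Finset.sum_div]
  · intro p hp
    have : 0 < p.1 ∧ 0 < p.2 ∧ ∃ n : ℕ, p.1 * p.2 = n ^ 2 := by
      by_contra h
      exact hp (if_neg h)
    obtain ⟨h1, h2, n, h3⟩ := this
    exact ⟨⟨n, p, Nat.mem_divisorsAntidiagonal.2 ⟨h3, by rw [← h3]; positivity⟩⟩, rfl⟩

theorem stmt2 : ∃ h : ℕ → ℝ,
    (∀ σ : ℝ, 1 / 2 < σ → Summable fun n : ℕ => |h n| / (n : ℝ) ^ σ) ∧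
    ∀ s : ℂ, 1 < s.re →
      (∑' p : ℕ × ℕ,
          if 0 < p.1 ∧ 0 < p.2 ∧ ∃ n : ℕ, p.1 * p.2 = n ^ 2 then
            (numSubgroups p.1 p.2 : ℂ) / ((p.1 * p.2 : ℕ) : ℂ) ^ s
          else 0)
        = riemannZeta (2 * s - 1) * ∑' n : ℕ, (h n : ℂ) / (n : ℂ) ^ s := by
  refine ⟨hh, fun σ hσ => hh_summable hσ, fun s hs => ?_⟩
  rw [hh_tsum]
  exact (lhs_tsum hs).trans (FF_hasSum (w := 2 * s) (by simp; linarith)).LSeries_eq
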